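/- For every DFAwtl M, if the jump complexity JC_M is not bounded by a constant, then JC_M is not sublinear: there is no DFAwtl M such that JC_M(n)=f(n) for a function f:ℕ→ℕ that is not constant-bounded yet satisfies lim_{n→∞} f(n)/n = 0. Equivalently, for every DFAwtl M, either JC_M is constant-bounded or there exists a constant c>0 such that JC_M(n) ≥ c·n for infinitely many n in the domain of JC_M. -/

import Mathlib

/-- A deterministic finite automaton with translucent letters (DFAwtl):
`delta` is a partial transition function, `start` the initial state,
`accept` the set of final states. -/
structure DFAwtl (Q V : Type*) where
  delta : Q → V → Option Q
  start : Q
  accept : Set Q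

namespace DFAwtl

variable {Q V : Type*}

/-- Sequential step: `(s, a·y) → (p, y)` when `δ(s,a) = p`. -/
def SeqStep (M : DFAwtl Q V) (c c' : Q × List V) : Prop :=
  ∃ a : V, c.2 = a :: c'.2 ∧ M.delta c.1 a = some c'.1

/-- Jumping step: `(s, x·a·y) ↻ (p, x·y)` when `x ≠ ε`, `δ(s,a) = p`, and
`δ(s,b)` is undefined for every letter `b` occurring in `x`. -/
def JumpStep (M : DFAwtl Q V) (c c' : Q × List V) : Prop :=
  ∃ (x y : List V) (a : V), x ≠ [] ∧ c.2 = x ++ a :: y ∧ c'.2 = x ++ y ∧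
    M.delta c.1 a = some c'.1 ∧ ∀ b ∈ x, M.delta c.1 b = none

/-- Either a sequential or a jumping step. -/
def Step (M : DFAwtl Q V) (c c' : Q × List V) : Prop :=
  M.SeqStep c c' ∨ M.JumpStep c c'

/-- Reflexive–transitive closure of sequential steps (the relation `→*`). -/
def SeqSteps (M : DFAwtl Q V) : Q × List V → Q × List V → Prop :=
  Relation.ReflTransGen M.SeqStep

/-- Reflexive–transitive closure of all steps (the relation `⊨*`). -/
def Steps (M : DFAwtl Q V) : Q × List V → Q × List V → Prop :=
  Relation.ReflTransGen M.Step

/-- `StepsN M c c' k` : configuration `c'` is reachable from `c` by a computation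
containing exactly `k` jumping steps. -/
inductive StepsN (M : DFAwtl Q V) : Q × List V → Q × List V → ℕ → Prop
  | refl (c : Q × List V) : StepsN M c c 0
  | seq {c c' c'' : Q × List V} {n : ℕ} :
      M.SeqStep c c' → StepsN M c' c'' n → StepsN M c c'' n
  | jump {c c' c'' : Q × List V} {n : ℕ} :
      M.JumpStep c c' → StepsN M c' c'' n → StepsN M c c'' (n + 1)

/-- The language accepted by `M`. -/
def lang (M : DFAwtl Q V) : Set (List V) :=
  {w | ∃ f ∈ M.accept, M.Steps (M.start, w) (f, [])}

/-- `M` accepts `w` by a computation with exactly `k` jumping steps. -/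
def AcceptsIn (M : DFAwtl Q V) (w : List V) (k : ℕ) : Prop :=
  ∃ f ∈ M.accept, M.StepsN (M.start, w) (f, []) k

/-- The jump complexity of a word: the (for a deterministic machine, unique)
number of jumping steps in an accepting computation on `w`. -/
noncomputable def jc (M : DFAwtl Q V) (w : List V) : ℕ :=
  sInf {k | M.AcceptsIn w k}

/-- The jump complexity function: the maximal number of jumps over accepted
words of length `n`. -/
noncomputable def JC (M : DFAwtl Q V) (n : ℕ) : ℕ :=
  sSup {k | ∃ w ∈ M.lang, w.length = n ∧ M.jc w = k}

/-- `JC_M` is bounded by a constant. -/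
def ConstBounded (M : DFAwtl Q V) : Prop :=
  ∃ c : ℕ, ∀ w ∈ M.lang, M.jc w ≤ c

/-- Extended (sequential) transition function on words. -/
def deltaStar (M : DFAwtl Q V) (q : Q) (w : List V) : Option Q :=
  w.foldl (fun o a => o.bind fun p => M.delta p a) (some q)

/-- A state `q` is `a`-deficient if `δ(q,a)` is undefined. -/
def Deficient (M : DFAwtl Q V) (q : Q) (a : V) : Prop :=
  M.delta q a = none

/-- The set `⟨q,a⟩` (empty when `δ(q,a)` is defined). -/
def angleSet (M : DFAwtl Q V) (q : Q) (a : V) : Set Q :=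
  {s | M.delta q a = none ∧ ∃ x : List V, x ≠ [] ∧
    M.SeqSteps (q, x) (s, []) ∧ M.Steps (s, a :: x) (q, [])}

/-- The set `[q,a]` (empty when `δ(q,a)` is defined). -/
def bracketSet (M : DFAwtl Q V) (q : Q) (a : V) : Set Q :=
  {s | M.delta q a = none ∧ ∃ x : List V, x ≠ [] ∧
    M.SeqSteps (q, x) (s, []) ∧ M.SeqSteps (s, a :: x) (q, [])}

/-- Every state of the automaton is useful. -/
def AllUseful (M : DFAwtl Q V) : Prop :=
  ∀ q : Q, (∃ x : List V, M.SeqSteps (M.start, x) (q, [])) ∧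
    (∃ (y : List V) (f : Q), f ∈ M.accept ∧ M.SeqSteps ((q : Q), y) (f, []))

/-- `δ(q,x')` is `a`-deficient for every prefix `x'` of `x`. -/
def PrefixDeficient (M : DFAwtl Q V) (q : Q) (a : V) (x : List V) : Prop :=
  ∀ x' : List V, ∀ p : Q, x' <+: x → M.deltaStar q x' = some p → M.delta p a = none

/-- `δ(q,y')` is `a`-deficient for every proper prefix `y'` of `y`. -/
def ProperPrefixDeficient (M : DFAwtl Q V) (q : Q) (a : V) (y : List V) : Prop :=
  ∀ y' : List V, ∀ p : Q, y' <+: y → y' ≠ y → M.deltaStar q y' = some p → M.delta p a = none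

/-- The condition of Claim 2: a pair `(q,a)` with `δ(q,a)` undefined, a nonempty
cycle in `q` visiting only `a`-deficient states, and an accepting path from `q`
reading a word `y` without `a` through `a`-deficient states and then an `a`. -/
def ClaimTwoCondition (M : DFAwtl Q V) (q : Q) (a : V) : Prop :=
  M.delta q a = none ∧
  (∃ x : List V, x ≠ [] ∧ M.SeqSteps (q, x) (q, []) ∧ M.PrefixDeficient q a x) ∧
  (∃ (y z : List V) (f : Q), a ∉ y ∧ f ∈ M.accept ∧
    M.SeqSteps (q, y ++ a :: z) (f, []) ∧ M.ProperPrefixDeficient q a y)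

end DFAwtl

namespace DFAwtl

variable {Q V : Type*}

/-- `p 0, p 1, …, p n = p 0` is a circuit in the transition graph of `M`,
with the `i`-th edge labelled by the letter `a i`. -/
def IsCircuit (M : DFAwtl Q V) (n : ℕ) (p : ℕ → Q) (a : ℕ → V) : Prop :=
  0 < n ∧ p n = p 0 ∧ ∀ i < n, M.delta (p i) (a i) = some (p (i + 1))

/-- The circuit is `x`-jumping: every state of the circuit from which an `x` is read
is `b`-deficient for some letter `b`, and at least one edge is labelled by a letter
other than `x`. -/
def IsXJumpingCircuit (M : DFAwtl Q V) (n : ℕ) (p : ℕ → Q) (a : ℕ → V) (x : V) : Prop :=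
  M.IsCircuit n p a ∧ (∀ i < n, a i = x → ∃ b : V, M.delta (p i) b = none) ∧
    ∃ i < n, a i ≠ x

/-- The state `q` is reachable from the initial state. -/
def ReachableState (M : DFAwtl Q V) (q : Q) : Prop :=
  ∃ u : List V, M.Steps (M.start, u) (q, [])

end DFAwtl
-- end preamble

/-!
Take an accepting computation in which some state `p` occurs again after a jump made from `p`; let
`a` be the first letter on the tape at that jump. If the loop from `p` to `p` leaves `a` on the
tape, it can be repeated behind `a`; if it reads `a`, it can be replaced by a loop that consumes a
word starting with `a` and can be repeated from an untouched tape. The repetitions give accepted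
words in which the number of jumps is linear in the length. Without such a repetition the states
from which a jump is made are pairwise distinct, so the number of jumps is at most the number of
states.
-/

theorem append_cons_inj_of_forall {α : Type*} {P : α → Prop} {x x' y y' : List α} {a a' : α}
    (hx : ∀ b ∈ x, P b) (hx' : ∀ b ∈ x', P b) (ha : ¬ P a) (ha' : ¬ P a')
    (h : x ++ a :: y = x' ++ a' :: y') : x = x' ∧ a = a' ∧ y = y' := by
  induction x generalizing x' <;> cases x' <;> grind

namespace DFAwtl

variable {Q V : Type*} {M : DFAwtl Q V}

/-- A step of `M` that skips exactly the translucent prefix `x` of the tape. It is a sequential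
step for `x = []` and a jumping step otherwise, which allows a common treatment of both. -/
def SkipStep (M : DFAwtl Q V) (x : List V) (c c' : Q × List V) : Prop :=
  ∃ (a : V) (y : List V), c.2 = x ++ a :: y ∧ c'.2 = x ++ y ∧
    M.delta c.1 a = some c'.1 ∧ ∀ b ∈ x, M.delta c.1 b = none

section Steps

variable {c c' d d' : Q × List V} {x x' : List V} {k m n : ℕ}

theorem seqStep_iff_skipStep_nil : M.SeqStep c d ↔ M.SkipStep [] c d := by
  simp [SeqStep, SkipStep]

theorem jumpStep_iff_exists_skipStep : M.JumpStep c d ↔ ∃ x ≠ [], M.SkipStep x c d := by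
  constructor
  · rintro ⟨x, y, a, hx, h⟩
    exact ⟨x, hx, a, y, h⟩
  · rintro ⟨x, hx, a, y, h⟩
    exact ⟨x, y, a, hx, h⟩

theorem step_iff_exists_skipStep : M.Step c d ↔ ∃ x, M.SkipStep x c d := by
  rw [Step, seqStep_iff_skipStep_nil, jumpStep_iff_exists_skipStep]
  constructor
  · rintro (h | ⟨x, -, h⟩)
    exacts [⟨[], h⟩, ⟨x, h⟩]
  · rintro ⟨x, h⟩
    obtain rfl | hx := eq_or_ne x []
    exacts [.inl h, .inr ⟨x, hx, h⟩]

theorem SkipStep.append_right (h : M.SkipStep x c d) (t : List V) :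
    M.SkipStep x (c.1, c.2 ++ t) (d.1, d.2 ++ t) := by
  obtain ⟨a, y, hc, hd, hδ, hx⟩ := h
  exact ⟨a, y ++ t, by simp [hc], by simp [hd], hδ, hx⟩

theorem SkipStep.unique (h : M.SkipStep x c d) (h' : M.SkipStep x' c d') : x = x' ∧ d = d' := by
  obtain ⟨a, y, hc, hd, hδ, hx⟩ := h
  obtain ⟨a', y', hc', hd', hδ', hx'⟩ := h'
  obtain ⟨rfl, rfl, rfl⟩ := append_cons_inj_of_forall hx hx' (by simp [hδ]) (by simp [hδ'])
    (hc.symm.trans hc')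
  exact ⟨rfl, Prod.ext (Option.some.inj (hδ.symm.trans hδ')) (hd.trans hd'.symm)⟩

theorem Step.length_eq (h : M.Step c d) : c.2.length = d.2.length + 1 := by
  obtain ⟨x, a, y, hc, hd, -⟩ := step_iff_exists_skipStep.1 h
  simp only [hc, hd, List.length_append, List.length_cons, Nat.add_assoc]

theorem not_step_nil (q : Q) (d : Q × List V) : ¬ M.Step (q, []) d :=
  fun h => by simpa using h.length_eq

theorem SeqStep.unique (h : M.SeqStep c d) (h' : M.SeqStep c d') : d = d' :=
  ((seqStep_iff_skipStep_nil.1 h).unique (seqStep_iff_skipStep_nil.1 h')).2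

theorem JumpStep.unique (h : M.JumpStep c d) (h' : M.JumpStep c d') : d = d' := by
  obtain ⟨x, -, h⟩ := jumpStep_iff_exists_skipStep.1 h
  obtain ⟨x', -, h'⟩ := jumpStep_iff_exists_skipStep.1 h'
  exact (h.unique h').2

theorem SeqStep.not_jumpStep (h : M.SeqStep c d) : ¬ M.JumpStep c d' := fun h' => by
  obtain ⟨x, hx, h'⟩ := jumpStep_iff_exists_skipStep.1 h'
  exact hx ((seqStep_iff_skipStep_nil.1 h).unique h').1.symm

theorem StepsN.trans (h : M.StepsN c c' m) (h' : M.StepsN c' d n) : M.StepsN c d (m + n) := by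
  induction h with
  | refl => rwa [Nat.zero_add]
  | seq s _ ih => exact .seq s (ih h')
  | jump s _ ih =>
    rw [Nat.add_right_comm]
    exact .jump s (ih h')

theorem StepsN.append_right (h : M.StepsN c d k) (t : List V) :
    M.StepsN (c.1, c.2 ++ t) (d.1, d.2 ++ t) k := by
  induction h with
  | refl => exact .refl _
  | seq s _ ih =>
    exact .seq (seqStep_iff_skipStep_nil.2 ((seqStep_iff_skipStep_nil.1 s).append_right t)) ih
  | jump s _ ih =>
    obtain ⟨x, hx, s⟩ := jumpStep_iff_exists_skipStep.1 s
    exact .jump (jumpStep_iff_exists_skipStep.2 ⟨x, hx, s.append_right t⟩) ih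

theorem StepsN.le_length (h : M.StepsN c d k) : k ≤ c.2.length := by
  induction h with
  | refl => exact Nat.zero_le _
  | seq s _ ih =>
    have := Step.length_eq (.inl s)
    lia
  | jump s _ ih =>
    have := Step.length_eq (.inr s)
    lia

theorem StepsN.eq_of_halted (h : M.StepsN c d k) (hd : ∀ e, ¬ M.Step d e)
    (h' : M.StepsN c d' n) (hd' : ∀ e, ¬ M.Step d' e) : k = n := by
  induction h generalizing n with
  | refl =>
    cases h' with
    | refl => rfl
    | seq s _ => exact absurd (.inl s) (hd _)
    | jump s _ => exact absurd (.inr s) (hd _)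
  | seq s _ ih =>
    cases h' with
    | refl => exact absurd (.inl s) (hd' _)
    | seq s' t =>
      obtain rfl := s.unique s'
      exact ih hd t
    | jump s' _ => exact absurd s' s.not_jumpStep
  | jump s _ ih =>
    cases h' with
    | refl => exact absurd (.inr s) (hd' _)
    | seq s' _ => exact absurd s s'.not_jumpStep
    | jump s' t =>
      obtain rfl := s.unique s'
      rw [ih hd t]

theorem steps_iff_exists_stepsN : M.Steps c d ↔ ∃ k, M.StepsN c d k := by
  constructor
  · intro h
    induction h using Relation.ReflTransGen.head_induction_on with
    | refl => exact ⟨0, .refl _⟩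
    | head s _ ih =>
      obtain ⟨k, ih⟩ := ih
      rcases s with s | s
      exacts [⟨k, .seq s ih⟩, ⟨k + 1, .jump s ih⟩]
  · rintro ⟨k, h⟩
    induction h with
    | refl => exact .refl
    | seq s _ ih => exact .head (.inl s) ih
    | jump s _ ih => exact .head (.inr s) ih

theorem Step.exists_delta_eq_some (h : M.Step c d) : ∃ a, M.delta c.1 a = some d.1 := by
  obtain ⟨-, a, -, -, -, hδ, -⟩ := step_iff_exists_skipStep.1 h
  exact ⟨a, hδ⟩

theorem Steps.exists_stepsN_zero (h : M.Steps c d) : ∃ u, M.StepsN (c.1, u) (d.1, []) 0 := by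
  induction h using Relation.ReflTransGen.head_induction_on with
  | refl => exact ⟨[], .refl _⟩
  | head s _ ih =>
    obtain ⟨u, hu⟩ := ih
    obtain ⟨a, hδ⟩ := s.exists_delta_eq_some
    exact ⟨a :: u, .seq (c' := (_, u)) ⟨a, rfl, hδ⟩ hu⟩

end Steps

section JumpComplexity

variable {w : List V} {k : ℕ}

theorem mem_lang_iff_exists_acceptsIn : w ∈ M.lang ↔ ∃ k, M.AcceptsIn w k := by
  constructor
  · rintro ⟨f, hf, run⟩
    obtain ⟨k, run⟩ := steps_iff_exists_stepsN.1 run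
    exact ⟨k, f, hf, run⟩
  · rintro ⟨k, f, hf, run⟩
    exact ⟨f, hf, steps_iff_exists_stepsN.2 ⟨k, run⟩⟩

theorem AcceptsIn.le_length (h : M.AcceptsIn w k) : k ≤ w.length := by
  obtain ⟨f, -, h⟩ := h
  exact h.le_length

theorem AcceptsIn.unique {k' : ℕ} (h : M.AcceptsIn w k) (h' : M.AcceptsIn w k') : k = k' := by
  obtain ⟨f, -, h⟩ := h
  obtain ⟨f', -, h'⟩ := h'
  exact h.eq_of_halted (not_step_nil f) h' (not_step_nil f')

theorem AcceptsIn.jc_eq (h : M.AcceptsIn w k) : M.jc w = k :=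
  AcceptsIn.unique (Nat.sInf_mem (s := {k | M.AcceptsIn w k}) ⟨k, h⟩) h

theorem AcceptsIn.le_JC (h : M.AcceptsIn w k) : k ≤ M.JC w.length := by
  refine le_csSup ⟨w.length, ?_⟩ ⟨w, mem_lang_iff_exists_acceptsIn.2 ⟨k, h⟩, rfl, h.jc_eq⟩
  rintro - ⟨w', hw', hlen, rfl⟩
  obtain ⟨k', h'⟩ := mem_lang_iff_exists_acceptsIn.1 hw'
  exact h'.jc_eq.trans_le (h'.le_length.trans_eq hlen)

theorem exists_linear_le_JC {C : ℕ}
    (h : ∀ N, ∃ w k, M.AcceptsIn w k ∧ N ≤ k ∧ w.length ≤ C * k) :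
    ∃ c : ℝ, 0 < c ∧ ∀ N : ℕ, ∃ n ≥ N,
      (∃ w ∈ M.lang, w.length = n) ∧ c * (n : ℝ) ≤ (M.JC n : ℝ) := by
  refine ⟨(C + 1 : ℝ)⁻¹, by positivity, fun N => ?_⟩
  obtain ⟨w, k, hw, hNk, hlen⟩ := h N
  refine ⟨w.length, hNk.trans hw.le_length,
    ⟨w, mem_lang_iff_exists_acceptsIn.2 ⟨k, hw⟩, rfl⟩, ?_⟩
  have hJC : w.length ≤ (C + 1) * M.JC w.length :=
    hlen.trans (Nat.mul_le_mul C.le_succ hw.le_JC)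
  rw [inv_mul_le_iff₀ (by positivity)]
  exact_mod_cast hJC

end JumpComplexity

section Pumping

variable {p q q' f : Q} {a : V} {r w s u x y : List V} {i j k : ℕ}

theorem StepsN.iterate (h : M.StepsN (p, s ++ x) (p, s) j) (m : ℕ) :
    M.StepsN (p, s ++ (List.replicate m x).flatten) (p, s) (m * j) := by
  induction m with
  | zero => simpa using StepsN.refl (M := M) (p, s)
  | succ m ih =>
    have := (h.append_right (List.replicate m x).flatten).trans ih
    simpa only [List.replicate_succ, List.flatten_cons, List.append_assoc, Nat.succ_mul,
      Nat.add_comm j] using this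

theorem StepsN.pump (entry : M.StepsN (q, u) (p, s) i) (loop : M.StepsN (p, s ++ x) (p, s) j)
    (exit : M.StepsN (p, s ++ y) (f, []) k) (m : ℕ) :
    M.StepsN (q, u ++ (List.replicate m x).flatten ++ y) (f, []) (i + m * j + k) :=
  (((entry.append_right _).trans (loop.iterate m)).append_right y).trans exit

theorem exists_acceptsIn_length_le_mul (hf : f ∈ M.accept)
    (entry : M.StepsN (M.start, u) (p, s) i) (loop : M.StepsN (p, s ++ x) (p, s) (j + 1))
    (exit : M.StepsN (p, s ++ y) (f, []) k) :
    ∃ C, ∀ N, ∃ w n, M.AcceptsIn w n ∧ N ≤ n ∧ w.length ≤ C * n := by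
  refine ⟨u.length + x.length + y.length, fun N =>
    ⟨_, _, ⟨f, hf, entry.pump loop exit (N + 1)⟩, ?_⟩⟩
  have jumps_ge : N + 1 ≤ i + (N + 1) * (j + 1) + k := by
    have := Nat.le_mul_of_pos_right (N + 1) j.succ_pos
    lia
  refine ⟨by lia, ?_⟩
  calc (u ++ (List.replicate (N + 1) x).flatten ++ y).length
      = u.length + (N + 1) * x.length + y.length := by simp [add_assoc]
    _ ≤ (u.length + x.length + y.length) * (N + 1) := by
        rw [mul_comm (N + 1), add_mul, add_mul]
        gcongr <;> exact Nat.le_mul_of_pos_right _ N.succ_pos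
    _ ≤ (u.length + x.length + y.length) * (i + (N + 1) * (j + 1) + k) := by gcongr

theorem JumpStep.exists_head {c d : Q × List V} (h : M.JumpStep c d) :
    ∃ a b r r', c.2 = a :: r ∧ d.2 = a :: r' ∧
      ∀ t, M.JumpStep (c.1, a :: b :: t) (d.1, a :: t) := by
  obtain ⟨_ | ⟨a, x⟩, y, b, hx, hc, hd, hδ, hnone⟩ := h
  · exact absurd rfl hx
  · exact ⟨a, b, _, _, hc, hd, fun t => ⟨[a], t, b, by simp, rfl, rfl, hδ,
      by simpa using hnone a⟩⟩

/-- While `a` stays first on the tape every step jumps over it, so the letters read meanwhile can be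
lined up directly behind `a`. -/
theorem Steps.head_kept_or_read (h : M.Steps (q, a :: r) (q', w)) :
    (∃ r' v k, w = a :: r' ∧ M.StepsN (q, a :: v) (q', [a]) k) ∨
      ∃ v k, M.StepsN (q, a :: v) (q', []) k := by
  generalize hc : (q, a :: r) = c at h
  induction h using Relation.ReflTransGen.head_induction_on generalizing q r with
  | refl =>
    obtain ⟨rfl, rfl⟩ := Prod.mk.inj hc
    exact .inl ⟨r, [], 0, rfl, .refl _⟩
  | @head _ d step rest ih =>
    obtain rfl := hc
    rcases step with ⟨b, hb, hδ⟩ | jump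
    · obtain ⟨rfl, -⟩ := List.cons.inj hb
      obtain ⟨v, hv⟩ := Steps.exists_stepsN_zero rest
      exact .inr ⟨v, 0, .seq (c' := (_, v)) ⟨a, rfl, hδ⟩ hv⟩
    · obtain ⟨a', b, r, r', hr, hd, jump⟩ := jump.exists_head
      obtain ⟨rfl, -⟩ := List.cons.inj hr
      rcases ih (Prod.ext rfl hd.symm) with ⟨r', v, k, hw, hv⟩ | ⟨v, k, hv⟩
      · exact .inl ⟨r', b :: v, k + 1, hw, .jump (jump v) hv⟩
      · exact .inr ⟨b :: v, k + 1, .jump (jump v) hv⟩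

end Pumping

section JumpLoop

variable {c c' d : Q × List V}

/-- Some computation from `c` to `c'` makes a jump from a state and later visits the same state
again. Such a loop can be pumped to produce many jumps. -/
def HasJumpLoop (M : DFAwtl Q V) (c c' : Q × List V) : Prop :=
  ∃ p w d w', M.Steps c (p, w) ∧ M.JumpStep (p, w) d ∧ M.Steps d (p, w') ∧ M.Steps (p, w') c'

theorem HasJumpLoop.head (step : M.Step c d) (h : M.HasJumpLoop d c') : M.HasJumpLoop c c' := by
  obtain ⟨p, w, e, w', hcp, h⟩ := h
  exact ⟨p, w, e, w', .head step hcp, h⟩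

theorem HasJumpLoop.exists_pumpable_loop {q f : Q} {w : List V} (h : M.HasJumpLoop (q, w) (f, [])) :
    ∃ p u s x y j k, M.StepsN (q, u) (p, s) 0 ∧ M.StepsN (p, s ++ x) (p, s) (j + 1) ∧
      M.StepsN (p, s ++ y) (f, []) k := by
  obtain ⟨p, w₁, ⟨p₁, w₁'⟩, w₂, entry, jump, loop, exit⟩ := h
  obtain ⟨u, hu⟩ := Steps.exists_stepsN_zero entry
  obtain ⟨a, b, -, r, -, rfl, jump⟩ := jump.exists_head
  rcases Steps.head_kept_or_read loop with ⟨r', v, j, rfl, hv⟩ | ⟨v, j, hv⟩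
  · rcases Steps.head_kept_or_read exit with ⟨_, _, _, h, -⟩ | ⟨y, k, hy⟩
    · exact absurd h (List.cons_ne_nil _ _).symm
    · exact ⟨p, u ++ [a], [a], b :: v, y, j, k, hu.append_right [a], .jump (jump v) hv, hy⟩
  · obtain ⟨y, hy⟩ := Steps.exists_stepsN_zero exit
    exact ⟨p, u, [], a :: b :: v, y, j, 0, hu, .jump (jump v) hv, hy⟩

/-- The states occurring in computations from `c` to `c'`. -/
def statesBetween (M : DFAwtl Q V) (c c' : Q × List V) : Set Q :=
  {p | ∃ w, M.Steps c (p, w) ∧ M.Steps (p, w) c'}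

theorem statesBetween_subset_of_step (step : M.Step c d) :
    M.statesBetween d c' ⊆ M.statesBetween c c' :=
  fun _ ⟨w, hdp, hpc'⟩ => ⟨w, .head step hdp, hpc'⟩

theorem StepsN.le_ncard_statesBetween [Finite Q] {k : ℕ} (h : M.StepsN c c' k)
    (noLoop : ¬ M.HasJumpLoop c c') : k ≤ (M.statesBetween c c').ncard := by
  induction h with
  | refl => exact Nat.zero_le _
  | seq s _ ih =>
    exact (ih fun loop => noLoop (loop.head (.inl s))).trans
      (Set.ncard_le_ncard (statesBetween_subset_of_step (.inl s)))
  | @jump c d c' n s rest ih =>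
    have fresh : c.1 ∉ M.statesBetween d c' := fun ⟨w, hdp, hpc'⟩ =>
      noLoop ⟨c.1, c.2, d, w, .refl, s, hdp, hpc'⟩
    have current : c.1 ∈ M.statesBetween c c' :=
      ⟨c.2, .refl, .head (.inr s) (steps_iff_exists_stepsN.2 ⟨n, rest⟩)⟩
    calc n + 1 ≤ (M.statesBetween d c').ncard + 1 :=
          Nat.succ_le_succ (ih fun loop => noLoop (loop.head (.inr s)))
      _ = (insert c.1 (M.statesBetween d c')).ncard := (Set.ncard_insert_of_notMem fresh).symm
      _ ≤ (M.statesBetween c c').ncard := Set.ncard_le_ncard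
          (Set.insert_subset current (statesBetween_subset_of_step (.inr s)))

end JumpLoop

end DFAwtl

theorem stmt_6_general {Q V : Type*} [Finite Q] (M : DFAwtl Q V) :
    (∀ w ∈ M.lang, M.jc w ≤ Nat.card Q) ∨
      ∃ c : ℝ, 0 < c ∧ ∀ N : ℕ, ∃ n ≥ N,
        (∃ w ∈ M.lang, w.length = n) ∧ c * (n : ℝ) ≤ (M.JC n : ℝ) := by
  by_cases hloop : ∃ f ∈ M.accept, ∃ w, M.HasJumpLoop (M.start, w) (f, [])
  · obtain ⟨f, hf, w, loop⟩ := hloop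
    obtain ⟨p, u, s, x, y, j, k, entry, loop, exit⟩ := loop.exists_pumpable_loop
    obtain ⟨C, family⟩ := DFAwtl.exists_acceptsIn_length_le_mul hf entry loop exit
    exact .inr (DFAwtl.exists_linear_le_JC family)
  · refine .inl fun w hw => ?_
    obtain ⟨k, hk⟩ := DFAwtl.mem_lang_iff_exists_acceptsIn.1 hw
    obtain ⟨f, hf, run⟩ := id hk
    calc M.jc w = k := hk.jc_eq
      _ ≤ (M.statesBetween (M.start, w) (f, [])).ncard :=
          run.le_ncard_statesBetween fun loop => hloop ⟨f, hf, w, loop⟩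
      _ ≤ Nat.card Q := Set.ncard_le_card _

/-- for every DFAwtl, either `JC_M` is constant-bounded or there exists
`c > 0` such that `JC_M(n) ≥ c·n` for infinitely many `n` in the domain of `JC_M`;
in particular `JC_M` cannot be unbounded yet sublinear. -/
theorem stmt_6 {Q V : Type*} [Fintype Q] [Fintype V] (M : DFAwtl Q V) :
    M.ConstBounded ∨
      ∃ c : ℝ, 0 < c ∧ ∀ N : ℕ, ∃ n ≥ N,
        (∃ w ∈ M.lang, w.length = n) ∧ c * (n : ℝ) ≤ (M.JC n : ℝ) :=
  (stmt_6_general M).imp_left fun bound => ⟨_, bound⟩
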